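/- Let n ≥ 8 and let 𝒻 be a family of 3-element subsets of [n], and let x ∈ [n] satisfy |𝒻(x)| ≥ n − 1. Then the number of sets F_i ∈ 𝒻 with x ∈ F_i such that G ∩ F_i ≠ {x} for every G ∈ 𝒻 (i.e., {x} is a witness of F_i) is at most 2. -/

import Mathlib

/-- A three-element set containing distinct `x` and `v` is `{x, v, y}` for some third `y`. -/
lemma exists_eq_triple_of_mem {α : Type*} [DecidableEq α] {F : Finset α} (hF : F.card = 3)
    {x v : α} (hx : x ∈ F) (hv : v ∈ F) (hvx : v ≠ x) :
    ∃ y, y ≠ x ∧ y ≠ v ∧ F = {x, v, y} := by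
  have hcard : ((F.erase x).erase v).card = 1 := by
    rw [Finset.card_erase_of_mem (Finset.mem_erase.2 ⟨hvx, hv⟩), Finset.card_erase_of_mem hx, hF]
  obtain ⟨y, hy⟩ := Finset.card_eq_one.1 hcard
  have hmem : y ∈ (F.erase x).erase v := by simp [hy]
  simp only [Finset.mem_erase] at hmem
  refine ⟨y, hmem.2.1, hmem.1, ?_⟩
  rw [← hy, Finset.insert_erase (Finset.mem_erase.2 ⟨hvx, hv⟩), Finset.insert_erase hx]

/-- Two sets that contain `x` and do not meet exactly in `{x}` share another element. -/
lemma exists_ne_mem_of_inter_ne_singleton {α : Type*} [DecidableEq α] {F G : Finset α} {x : α}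
    (hF : x ∈ F) (hG : x ∈ G) (h : G ∩ F ≠ {x}) : ∃ y, y ≠ x ∧ y ∈ G ∧ y ∈ F := by
  by_contra! hcon
  refine h (Finset.Subset.antisymm (fun y hy => ?_) (by simp [hF, hG]))
  rw [Finset.mem_inter] at hy
  by_contra hyx
  exact hcon y (by simpa using hyx) hy.1 hy.2

/-- A three-element set through `x` that shares a further element with each of three distinct
triples through `x` and `v` contains `v`. -/
lemma mem_of_meets_three_triples {α : Type*} [DecidableEq α] {x v a b c : α} {F : Finset α}
    (hF : F.card = 3) (hx : x ∈ F) (hax : a ≠ x) (hbx : b ≠ x) (hcx : c ≠ x)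
    (hab : a ≠ b) (hac : a ≠ c) (hbc : b ≠ c)
    (hA : ∃ y, y ≠ x ∧ y ∈ F ∧ y ∈ ({x, v, a} : Finset α))
    (hB : ∃ y, y ≠ x ∧ y ∈ F ∧ y ∈ ({x, v, b} : Finset α))
    (hC : ∃ y, y ≠ x ∧ y ∈ F ∧ y ∈ ({x, v, c} : Finset α)) : v ∈ F := by
  by_contra hv
  have haF : a ∈ F := by grind
  have hbF : b ∈ F := by grind
  have hcF : c ∈ F := by grind
  obtain ⟨y, -, -, rfl⟩ := exists_eq_triple_of_mem hF hx haF hax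
  grind

/-- A three-element set through `x` that shares a further element with each of `{x, p, r}`,
`{x, p, q}` and `{x, q, r}` is one of these three sets. -/
lemma eq_of_meets_triangle {α : Type*} [DecidableEq α] {x p q r : α} {F : Finset α}
    (hF : F.card = 3) (hx : x ∈ F) (hpx : p ≠ x) (hqx : q ≠ x)
    (hrx : r ≠ x) (hpq : p ≠ q) (hpr : p ≠ r) (hqr : q ≠ r)
    (hA : ∃ y, y ≠ x ∧ y ∈ F ∧ y ∈ ({x, p, r} : Finset α))
    (hB : ∃ y, y ≠ x ∧ y ∈ F ∧ y ∈ ({x, p, q} : Finset α))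
    (hC : ∃ y, y ≠ x ∧ y ∈ F ∧ y ∈ ({x, q, r} : Finset α)) :
    F = {x, p, r} ∨ F = {x, p, q} ∨ F = {x, q, r} := by
  have hpair : ∀ s t, s ≠ x → t ≠ x → s ≠ t → s ∈ F → t ∈ F → F = {x, s, t} := by
    intro s t hsx htx hst hs ht
    obtain ⟨y, -, -, rfl⟩ := exists_eq_triple_of_mem hF hx hs hsx
    simp only [Finset.mem_insert, Finset.mem_singleton] at ht
    rw [(ht.resolve_left htx).resolve_left hst.symm]
  have htwo : p ∈ F ∧ r ∈ F ∨ p ∈ F ∧ q ∈ F ∨ q ∈ F ∧ r ∈ F := by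
    clear hpair
    grind
  rcases htwo with ⟨hp, hr⟩ | ⟨hp, hq⟩ | ⟨hq, hr⟩
  · exact Or.inl (hpair p r hpx hrx hpr hp hr)
  · exact Or.inr (Or.inl (hpair p q hpx hqx hpq hp hq))
  · exact Or.inr (Or.inr (hpair q r hqx hrx hqr hq hr))

/-- At most `n - 2` three-element subsets of `[n]` contain two given elements. -/
lemma card_triples_through_pair_le {n x v : ℕ} {𝒢 : Finset (Finset ℕ)}
    (hsub : ∀ F ∈ 𝒢, F ⊆ Finset.Icc 1 n) (hcard : ∀ F ∈ 𝒢, F.card = 3)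
    (hx : x ∈ Finset.Icc 1 n) (hv : v ∈ Finset.Icc 1 n) (hvx : v ≠ x)
    (hmem : ∀ F ∈ 𝒢, x ∈ F ∧ v ∈ F) : 𝒢.card ≤ n - 2 := by
  have himage : 𝒢 ⊆ (((Finset.Icc 1 n).erase x).erase v).image (fun y => {x, v, y}) := by
    intro F hF
    obtain ⟨y, hyx, hyv, hFy⟩ :=
      exists_eq_triple_of_mem (hcard F hF) (hmem F hF).1 (hmem F hF).2 hvx
    have hyn : y ∈ Finset.Icc 1 n := hsub F hF (by simp [hFy])
    exact Finset.mem_image.2 ⟨y, by simp only [Finset.mem_erase]; exact ⟨hyv, hyx, hyn⟩, hFy.symm⟩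
  refine (Finset.card_le_card himage).trans (Finset.card_image_le.trans ?_)
  rw [Finset.card_erase_of_mem (Finset.mem_erase.2 ⟨hvx, hv⟩), Finset.card_erase_of_mem hx,
    Nat.card_Icc]
  omega

/-- If `x` lies in at least `n - 1` members of `𝒻`, then at most two members of `𝒻`
admit the singleton `{x}` as a witness. -/
theorem stmt_9 (n : ℕ) (hn : 8 ≤ n) (𝒻 : Finset (Finset ℕ))
    (hsub : ∀ F ∈ 𝒻, F ⊆ Finset.Icc 1 n) (hcard : ∀ F ∈ 𝒻, F.card = 3)
    (x : ℕ) (hx : x ∈ Finset.Icc 1 n)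
    (hdeg : n - 1 ≤ (𝒻.filter (fun F => x ∈ F)).card) :
    (𝒻.filter (fun F => x ∈ F ∧ ∀ G ∈ 𝒻, G ∩ F ≠ ({x} : Finset ℕ))).card ≤ 2 := by
  by_contra! hlt
  obtain ⟨A, B, C, hA, hB, hC, hAB, hAC, hBC⟩ := Finset.two_lt_card_iff.1 hlt
  simp only [Finset.mem_filter] at hA hB hC
  obtain ⟨hA, hxA, hwA⟩ := hA
  obtain ⟨hB, hxB, hwB⟩ := hB
  obtain ⟨hC, hxC, hwC⟩ := hC
  have hmA : ∀ F ∈ 𝒻, x ∈ F → ∃ y, y ≠ x ∧ y ∈ F ∧ y ∈ A := fun F hF hxF =>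
    exists_ne_mem_of_inter_ne_singleton hxA hxF (hwA F hF)
  have hmB : ∀ F ∈ 𝒻, x ∈ F → ∃ y, y ≠ x ∧ y ∈ F ∧ y ∈ B := fun F hF hxF =>
    exists_ne_mem_of_inter_ne_singleton hxB hxF (hwB F hF)
  have hmC : ∀ F ∈ 𝒻, x ∈ F → ∃ y, y ≠ x ∧ y ∈ F ∧ y ∈ C := fun F hF hxF =>
    exists_ne_mem_of_inter_ne_singleton hxC hxF (hwC F hF)
  by_cases hcommon : ∃ v, v ≠ x ∧ v ∈ A ∧ v ∈ B ∧ v ∈ C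
  · obtain ⟨v, hvx, hvA, hvB, hvC⟩ := hcommon
    have hall : ∀ F ∈ 𝒻, x ∈ F → v ∈ F := by
      intro F hF hxF
      obtain ⟨a, hax, -, rfl⟩ := exists_eq_triple_of_mem (hcard A hA) hxA hvA hvx
      obtain ⟨b, hbx, -, rfl⟩ := exists_eq_triple_of_mem (hcard B hB) hxB hvB hvx
      obtain ⟨c, hcx, -, rfl⟩ := exists_eq_triple_of_mem (hcard C hC) hxC hvC hvx
      exact mem_of_meets_three_triples (hcard F hF) hxF hax hbx hcx
        (fun h => hAB (by rw [h])) (fun h => hAC (by rw [h])) (fun h => hBC (by rw [h]))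
        (hmA F hF hxF) (hmB F hF hxF) (hmC F hF hxF)
    have hle : (𝒻.filter (fun F => x ∈ F)).card ≤ n - 2 :=
      card_triples_through_pair_le
        (fun F hF => hsub F (Finset.mem_filter.1 hF).1)
        (fun F hF => hcard F (Finset.mem_filter.1 hF).1) hx (hsub A hA hvA) hvx
        (fun F hF => ⟨(Finset.mem_filter.1 hF).2,
          hall F (Finset.mem_filter.1 hF).1 (Finset.mem_filter.1 hF).2⟩)
    omega
  · push Not at hcommon
    obtain ⟨p, hpx, hpA, hpB⟩ := hmB A hA hxA
    obtain ⟨q, hqx, hqB, hqC⟩ := hmC B hB hxB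
    obtain ⟨r, hrx, hrC, hrA⟩ := hmA C hC hxC
    have hpC : p ∉ C := hcommon p hpx hpA hpB
    have hqA : q ∉ A := fun h => hcommon q hqx h hqB hqC
    have hrB : r ∉ B := fun h => hcommon r hrx hrA h hrC
    have hAeq : A = {x, p, r} := by
      obtain ⟨y, -, -, rfl⟩ := exists_eq_triple_of_mem (hcard A hA) hxA hpA hpx
      grind
    have hBeq : B = {x, p, q} := by
      obtain ⟨y, -, -, rfl⟩ := exists_eq_triple_of_mem (hcard B hB) hxB hpB hpx
      grind
    have hCeq : C = {x, q, r} := by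
      obtain ⟨y, -, -, rfl⟩ := exists_eq_triple_of_mem (hcard C hC) hxC hqC hqx
      grind
    have hle : 𝒻.filter (fun F => x ∈ F) ⊆ {A, B, C} := by
      intro F hF
      obtain ⟨hF, hxF⟩ := Finset.mem_filter.1 hF
      have hpq : p ≠ q := fun h => hpC (h ▸ hqC)
      have hpr : p ≠ r := fun h => hpC (h ▸ hrC)
      have hqr : q ≠ r := fun h => hqA (h ▸ hrA)
      simp only [Finset.mem_insert, Finset.mem_singleton]
      rw [hAeq, hBeq, hCeq]
      exact eq_of_meets_triangle (hcard F hF) hxF hpx hqx hrx hpq hpr hqr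
        (hAeq ▸ hmA F hF hxF) (hBeq ▸ hmB F hF hxF) (hCeq ▸ hmC F hF hxF)
    have := (Finset.card_le_card hle).trans Finset.card_le_three
    omega
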